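/- arXiv:1608.04635 — 4 statements merged into one kernel-verified Lean document; each statement's English description precedes it below -/
import Mathlib

section
/- Let n ≥ 2. Given any smooth map Λ : [0,1] → 𝔍_{n+1}, there exists a unique smooth curve γ : [0,1] → S^n ⊂ ℝ^{n+1} with det(γ(t), γ'(t), …, γ^{(n)}(t)) > 0 for all t ∈ [0,1], whose Frenet frame curve satisfies F_γ(0) = I and F_γ(t)⁻¹F_γ'(t) = Λ(t) for all t ∈ [0,1]. -/
open Matrix Set

/-- An upper triangular real matrix with positive diagonal entries. -/
def IsUpperPos {m : ℕ} (U : Matrix (Fin m) (Fin m) ℝ) : Prop :=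
  (∀ i j : Fin m, j < i → U i j = 0) ∧ ∀ i : Fin m, 0 < U i i

/-- A special orthogonal matrix. -/
def IsSpecialOrthogonal {m : ℕ} (Q : Matrix (Fin m) (Fin m) ℝ) : Prop :=
  Qᵀ * Q = 1 ∧ Q.det = 1

/-- Membership in `𝔍`: skew-symmetric tridiagonal matrices with positive subdiagonal. -/
def MemJ {m : ℕ} (M : Matrix (Fin m) (Fin m) ℝ) : Prop :=
  Mᵀ = -M ∧ (∀ i j : Fin m, (i : ℕ) + 1 < (j : ℕ) → M i j = 0) ∧
    ∀ i j : Fin m, (i : ℕ) = (j : ℕ) + 1 → 0 < M i j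

/-- Entrywise derivative of a matrix-valued curve. -/
noncomputable def matDeriv {m : ℕ} (Γ : ℝ → Matrix (Fin m) (Fin m) ℝ) (t : ℝ) :
    Matrix (Fin m) (Fin m) ℝ :=
  Matrix.of fun i j => deriv (fun s => Γ s i j) t

/-- The matrix whose `j`-th column is the `j`-th derivative of the curve `γ` at `t`. -/
noncomputable def derivMat (m : ℕ) (γ : ℝ → Fin m → ℝ) (t : ℝ) :
    Matrix (Fin m) (Fin m) ℝ :=
  Matrix.of fun i j => iteratedDeriv (j : ℕ) γ t i

/-- `γ` is a smooth positive locally convex curve on `Sⁿ` (on the interval `[0,1]`) whose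
Frenet frame curve `F` satisfies `F 0 = I` and has logarithmic derivative `Λ` on `[0,1]`. -/
def IsFrenetSolution (n : ℕ) (Λ : ℝ → Matrix (Fin (n+1)) (Fin (n+1)) ℝ)
    (γ : ℝ → Fin (n+1) → ℝ) : Prop :=
  ContDiff ℝ (⊤ : ℕ∞) γ ∧
  (∀ t ∈ Icc (0 : ℝ) 1, ∑ x, γ t x ^ 2 = 1) ∧
  (∀ t ∈ Icc (0 : ℝ) 1, 0 < (derivMat (n+1) γ t).det) ∧
  ∃ F : ℝ → Matrix (Fin (n+1)) (Fin (n+1)) ℝ,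
    (∀ i j : Fin (n+1), ContDiff ℝ (⊤ : ℕ∞) fun t => F t i j) ∧
    F 0 = 1 ∧
    (∀ t ∈ Icc (0 : ℝ) 1, IsSpecialOrthogonal (F t)) ∧
    (∀ t ∈ Icc (0 : ℝ) 1, ∃ R, IsUpperPos R ∧ derivMat (n+1) γ t = F t * R) ∧
    (∀ t ∈ Icc (0 : ℝ) 1, (F t)⁻¹ * matDeriv F t = Λ t)

/-!
A frame curve with logarithmic derivative `Λ` is a solution of the linear equation `F' = F Λ`, which
the Peano–Baker series `1 + ∫ Λ + ∫ (∫ Λ) Λ + ⋯` solves for all times. Since `Λ` is skew-symmetric,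
`F Gᵀ` is constant for any two solutions `F` and `G`: solutions issued from `1` stay in `SO_{n+1}`
and coincide. The curve has to be the first column `γ = F e₀`, because a Frenet frame has `γ` as its
first column. Conversely, the derivatives of `F c` are `F (D c)`, `F (D² c)`, … with
`D c = c' + Λ c`, and tridiagonality makes each `D` push the support of `e₀` down by exactly one
coordinate, with a positive factor. Hence the matrix with columns `e₀, D e₀, D² e₀, …` is upper
triangular with positive diagonal, and `F` is the Frenet frame of its first column.
-/

section BanachAlgebra

variable {𝔸 : Type*} [NormedRing 𝔸] [NormedAlgebra ℝ 𝔸]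

/-- The `k`-th term of the Peano–Baker series of `A`, that is, the `k`-th Picard increment for the
equation `X' = X * A`, `X 0 = 1`. -/
noncomputable def peanoBakerTerm (A : ℝ → 𝔸) : ℕ → ℝ → 𝔸
  | 0 => fun _ => 1
  | k + 1 => fun t => ∫ s in (0 : ℝ)..t, peanoBakerTerm A k s * A s

/-- The Peano–Baker series of `A`: the fundamental solution of `X' = X * A`, `X 0 = 1`. -/
noncomputable def peanoBakerSeries (A : ℝ → 𝔸) (t : ℝ) : 𝔸 :=
  ∑' k, peanoBakerTerm A k t

lemma peanoBakerTerm_succ_apply_zero (A : ℝ → 𝔸) (k : ℕ) : peanoBakerTerm A (k + 1) 0 = 0 :=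
  intervalIntegral.integral_same

lemma peanoBakerSeries_zero (A : ℝ → 𝔸) : peanoBakerSeries A 0 = 1 := by
  refine (tsum_eq_single 0 fun k hk => ?_).trans rfl
  obtain ⟨k, rfl⟩ := Nat.exists_eq_succ_of_ne_zero hk
  exact peanoBakerTerm_succ_apply_zero A k

lemma norm_peanoBakerTerm_le {A : ℝ → 𝔸} {K T : ℝ} (hA : ∀ s, |s| ≤ T → ‖A s‖ ≤ K) (k : ℕ)
    {t : ℝ} (ht : |t| ≤ T) :
    ‖peanoBakerTerm A k t‖ ≤ ‖(1 : 𝔸)‖ * ((K * |t|) ^ k / k.factorial) := by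
  induction k generalizing t with
  | zero => simp [peanoBakerTerm]
  | succ k ih =>
    have hbound : ∀ s ∈ uIoc 0 t, ‖peanoBakerTerm A k s * A s‖ ≤
        ‖(1 : 𝔸)‖ * (K ^ (k + 1) / k.factorial) * |s - 0| ^ k := fun s hs => by
      have hst : |s| ≤ T := by
        simpa using (abs_sub_left_of_mem_uIcc (uIoc_subset_uIcc hs)).trans (by simpa using ht)
      calc ‖peanoBakerTerm A k s * A s‖ ≤ ‖peanoBakerTerm A k s‖ * ‖A s‖ := norm_mul_le _ _
        _ ≤ ‖(1 : 𝔸)‖ * ((K * |s|) ^ k / k.factorial) * K :=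
          mul_le_mul (ih hst) (hA s hst) (norm_nonneg _) ((norm_nonneg _).trans (ih hst))
        _ = ‖(1 : 𝔸)‖ * (K ^ (k + 1) / k.factorial) * |s - 0| ^ k := by rw [sub_zero]; ring
    calc ‖peanoBakerTerm A (k + 1) t‖
        ≤ ∫ s in uIoc 0 t, ‖peanoBakerTerm A k s * A s‖ :=
          intervalIntegral.norm_integral_le_integral_norm_uIoc
      _ ≤ ∫ s in uIoc 0 t, ‖(1 : 𝔸)‖ * (K ^ (k + 1) / k.factorial) * |s - 0| ^ k :=
          MeasureTheory.integral_mono_of_nonneg (.of_forall fun _ => norm_nonneg _)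
            (Continuous.integrableOn_uIoc (by fun_prop))
            (MeasureTheory.ae_restrict_of_forall_mem measurableSet_uIoc hbound)
      _ = ‖(1 : 𝔸)‖ * ((K * |t|) ^ (k + 1) / (k + 1).factorial) := by
          rw [MeasureTheory.integral_const_mul, integral_pow_abs_sub_uIoc, sub_zero,
            Nat.factorial_succ]
          push_cast
          field_simp
          ring

lemma exists_norm_le_of_abs_le {E : Type*} [SeminormedAddCommGroup E] {f : ℝ → E}
    (hf : Continuous f) (T : ℝ) : ∃ K, ∀ s, |s| ≤ T → ‖f s‖ ≤ K := by
  obtain ⟨K, hK⟩ := isCompact_Icc.exists_bound_of_continuousOn (hf.continuousOn (s := Icc (-T) T))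
  exact ⟨K, fun s hs => hK s (abs_le.1 hs)⟩

lemma continuous_peanoBakerTerm {A : ℝ → 𝔸} (hA : Continuous A) :
    ∀ k, Continuous (peanoBakerTerm A k)
  | 0 => continuous_const
  | k + 1 => intervalIntegral.continuous_primitive
      (fun _ _ => ((continuous_peanoBakerTerm hA k).mul hA).intervalIntegrable _ _) 0

section Complete

variable [CompleteSpace 𝔸] {A : ℝ → 𝔸}

lemma summable_peanoBakerTerm (hA : Continuous A) (t : ℝ) :
    Summable fun k => peanoBakerTerm A k t := by
  obtain ⟨K, hK⟩ := exists_norm_le_of_abs_le hA |t|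
  exact .of_norm_bounded ((Real.summable_pow_div_factorial _).mul_left _)
    fun k => norm_peanoBakerTerm_le hK k le_rfl

lemma hasDerivAt_peanoBakerTerm_succ (hA : Continuous A) (k : ℕ) (t : ℝ) :
    HasDerivAt (peanoBakerTerm A (k + 1)) (peanoBakerTerm A k t * A t) t :=
  (((continuous_peanoBakerTerm hA k).mul hA).integral_hasStrictDerivAt 0 t).hasDerivAt

theorem hasDerivAt_peanoBakerSeries (hA : Continuous A) (t : ℝ) :
    HasDerivAt (peanoBakerSeries A) (peanoBakerSeries A t * A t) t := by
  obtain ⟨K, hK⟩ := exists_norm_le_of_abs_le hA (|t| + 1)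
  have hbound : ∀ k, ∀ s ∈ Metric.ball (0 : ℝ) (|t| + 1), ‖peanoBakerTerm A k s * A s‖ ≤
      ‖(1 : 𝔸)‖ * ((K * (|t| + 1)) ^ k / k.factorial) * K := fun k s hs => by
    have hs : |s| ≤ |t| + 1 := (mem_ball_zero_iff.1 hs).le
    have hK0 : 0 ≤ K := (norm_nonneg _).trans (hK s hs)
    refine (norm_mul_le _ _).trans (mul_le_mul ?_ (hK s hs) (norm_nonneg _) (by positivity))
    exact (norm_peanoBakerTerm_le hK k hs).trans (by gcongr)
  have htail : HasDerivAt (fun s => ∑' k, peanoBakerTerm A (k + 1) s)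
      (∑' k, peanoBakerTerm A k t * A t) t :=
    hasDerivAt_tsum_of_isPreconnected
      (((Real.summable_pow_div_factorial _).mul_left _).mul_right _) Metric.isOpen_ball
      (convex_ball 0 _).isPreconnected (fun k s _ => hasDerivAt_peanoBakerTerm_succ hA k s) hbound
      (Metric.mem_ball_self (by positivity))
      ((summable_nat_add_iff 1).2 (summable_peanoBakerTerm hA 0)) (by simp)
  rw [(summable_peanoBakerTerm hA t).tsum_mul_right] at htail
  exact (htail.const_add 1).congr_of_eventuallyEq
    (.of_forall fun s => (summable_peanoBakerTerm hA s).tsum_eq_zero_add)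

end Complete

lemma contDiff_of_hasDerivAt_mul {X A : ℝ → 𝔸} (hA : ContDiff ℝ (⊤ : ℕ∞) A)
    (hX : ∀ t, HasDerivAt X (X t * A t) t) : ContDiff ℝ (⊤ : ℕ∞) X := by
  refine contDiff_infty.2 fun k => ?_
  induction k with
  | zero =>
    exact contDiff_zero.2 (continuous_iff_continuousAt.2 fun t => (hX t).continuousAt)
  | succ k ih =>
    rw [Nat.cast_succ, contDiff_succ_iff_deriv, deriv_eq hX]
    refine ⟨fun t => (hX t).differentiableAt, by simp, ?_⟩
    exact ih.mul (contDiff_infty.1 hA k)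

lemma mul_star_eq_of_hasDerivAt_mul [StarRing 𝔸] [StarModule ℝ 𝔸] [ContinuousStar 𝔸]
    {X Y A : ℝ → 𝔸} {a b : ℝ} (hX : ∀ t ∈ Icc a b, HasDerivAt X (X t * A t) t)
    (hY : ∀ t ∈ Icc a b, HasDerivAt Y (Y t * A t) t) (hA : ∀ t ∈ Icc a b, star (A t) = -A t) :
    ∀ t ∈ Icc a b, X t * star (Y t) = X a * star (Y a) := by
  have hderiv : ∀ t ∈ Icc a b, HasDerivAt (fun s => X s * star (Y s)) 0 t := fun t ht => by
    convert! (hX t ht).mul (hY t ht).star using 1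
    rw [star_mul, hA t ht]
    noncomm_ring
  exact constant_of_has_deriv_right_zero
    (fun t ht => (hderiv t ht).continuousAt.continuousWithinAt)
    fun t ht => (hderiv t (Ico_subset_Icc_self ht)).hasDerivWithinAt

end BanachAlgebra

section MatrixCurves

-- The Frobenius norm, unlike the operator norm of the sup norm, makes transposition isometric.
open scoped Matrix.Norms.Frobenius

variable {ι κ : Type*} [Fintype ι] [Fintype κ]

lemma contDiff_matrix_iff {E : Type*} [NormedAddCommGroup E] [NormedSpace ℝ E] {k : WithTop ℕ∞}
    {F : E → Matrix ι κ ℝ} : ContDiff ℝ k F ↔ ∀ i j, ContDiff ℝ k fun x => F x i j := by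
  rw [← (Matrix.ofLinearEquiv ℝ (α := ℝ)).symm.toContinuousLinearEquiv.comp_contDiff_iff]
  simp only [contDiff_pi]
  rfl

lemma hasDerivAt_matrix_apply {ι κ : Type*} [Finite ι] [Finite κ] {F : ℝ → Matrix ι κ ℝ}
    {F' : Matrix ι κ ℝ} {t : ℝ} (hF : HasDerivAt F F' t) (i : ι) (j : κ) :
    HasDerivAt (fun s => F s i j) (F' i j) t := by
  have := Fintype.ofFinite ι
  have := Fintype.ofFinite κ
  exact (Matrix.entryLinearMap ℝ ℝ i j).toContinuousLinearMap.hasFDerivAt.comp_hasDerivAt t hF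

lemma matDeriv_eq_of_hasDerivAt {m : ℕ} {F : ℝ → Matrix (Fin m) (Fin m) ℝ}
    {F' : Matrix (Fin m) (Fin m) ℝ} {t : ℝ} (hF : HasDerivAt F F' t) : matDeriv F t = F' := by
  ext i j
  exact (hasDerivAt_matrix_apply hF i j).deriv

lemma hasDerivAt_mulVec {ι : Type*} [Finite ι] {F : ℝ → Matrix ι κ ℝ} {F' : Matrix ι κ ℝ}
    {c : ℝ → κ → ℝ} {c' : κ → ℝ} {t : ℝ} (hF : HasDerivAt F F' t) (hc : HasDerivAt c c' t) :
    HasDerivAt (fun s => F s *ᵥ c s) (F' *ᵥ c t + F t *ᵥ c') t := by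
  have := Fintype.ofFinite ι
  refine hasDerivAt_pi.2 fun i => ?_
  simp only [Matrix.mulVec, dotProduct, Pi.add_apply, ← Finset.sum_add_distrib]
  exact HasDerivAt.fun_sum fun k _ => (hasDerivAt_matrix_apply hF i k).mul (hasDerivAt_pi.1 hc k)

lemma mul_transpose_eq_of_hasDerivAt_mul {F G Λ : ℝ → Matrix ι ι ℝ} {a b : ℝ}
    (hF : ∀ t ∈ Icc a b, HasDerivAt F (F t * Λ t) t)
    (hG : ∀ t ∈ Icc a b, HasDerivAt G (G t * Λ t) t) (hΛ : ∀ t ∈ Icc a b, (Λ t)ᵀ = -Λ t) :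
    ∀ t ∈ Icc a b, F t * (G t)ᵀ = F a * (G a)ᵀ := by
  classical
  simp only [← Matrix.conjTranspose_eq_transpose_of_trivial, ← Matrix.star_eq_conjTranspose] at hΛ ⊢
  exact mul_star_eq_of_hasDerivAt_mul hF hG hΛ

lemma det_eq_one_of_orthogonal [DecidableEq ι] {X : Type*} [TopologicalSpace X]
    {F : X → Matrix ι ι ℝ} {s : Set X} (hs : IsPreconnected s) (hF : ContinuousOn F s)
    (horth : ∀ x ∈ s, (F x)ᵀ * F x = 1) {a : X} (ha : a ∈ s) (hdet : (F a).det = 1) :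
    ∀ x ∈ s, (F x).det = 1 := by
  refine hs.eq_of_sq_eq (f := fun x => (F x).det) (g := 1) ?_ continuousOn_const
    (fun x hx => ?_) (fun _ => one_ne_zero) ha hdet
  · exact (Continuous.matrix_det continuous_id).comp_continuousOn hF
  · simpa [sq] using congrArg Matrix.det (horth x hx)

theorem isSpecialOrthogonal_of_hasDerivAt_mul {m : ℕ} {F Λ : ℝ → Matrix (Fin m) (Fin m) ℝ}
    {a b : ℝ} (hF : ∀ t ∈ Icc a b, HasDerivAt F (F t * Λ t) t)
    (hΛ : ∀ t ∈ Icc a b, (Λ t)ᵀ = -Λ t) (ha : IsSpecialOrthogonal (F a)) :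
    ∀ t ∈ Icc a b, IsSpecialOrthogonal (F t) := by
  have horth : ∀ t ∈ Icc a b, (F t)ᵀ * F t = 1 := fun t ht => by
    rw [mul_eq_one_comm, mul_transpose_eq_of_hasDerivAt_mul hF hF hΛ t ht, mul_eq_one_comm]
    exact ha.1
  have hcont : ContinuousOn F (Icc a b) := fun t ht => (hF t ht).continuousAt.continuousWithinAt
  exact fun t ht => ⟨horth t ht, det_eq_one_of_orthogonal isPreconnected_Icc hcont horth
    (left_mem_Icc.2 (ht.1.trans ht.2)) ha.2 t ht⟩

/-- The derivative of a coordinate vector `c` in a frame moving with logarithmic derivative `Λ`: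
the derivative of `F c` is `F (movingDeriv Λ c)` whenever `F' = F Λ`. -/
noncomputable def movingDeriv (Λ : ℝ → Matrix ι ι ℝ) (c : ℝ → ι → ℝ) (t : ℝ) : ι → ℝ :=
  deriv c t + Λ t *ᵥ c t

variable {F Λ : ℝ → Matrix ι ι ℝ} {c : ℝ → ι → ℝ}

lemma contDiff_iterate_movingDeriv (hΛ : ContDiff ℝ (⊤ : ℕ∞) Λ) (hc : ContDiff ℝ (⊤ : ℕ∞) c)
    (k : ℕ) : ContDiff ℝ (⊤ : ℕ∞) ((movingDeriv Λ)^[k] c) := by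
  induction k with
  | zero => exact hc
  | succ k ih =>
    rw [Function.iterate_succ_apply']
    refine (contDiff_infty_iff_deriv.1 ih).2.add (contDiff_pi.2 fun i => ?_)
    simp only [Matrix.mulVec, dotProduct]
    exact ContDiff.sum fun j _ => (contDiff_matrix_iff.1 hΛ i j).mul (contDiff_pi.1 ih j)

theorem iteratedDeriv_mulVec (hΛ : ContDiff ℝ (⊤ : ℕ∞) Λ)
    (hF : ∀ t, HasDerivAt F (F t * Λ t) t) (hc : ContDiff ℝ (⊤ : ℕ∞) c) (k : ℕ) :
    iteratedDeriv k (fun t => F t *ᵥ c t) = fun t => F t *ᵥ (movingDeriv Λ)^[k] c t := by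
  induction k with
  | zero => simp
  | succ k ih =>
    rw [iteratedDeriv_succ, ih, Function.iterate_succ_apply']
    refine deriv_eq fun t => ?_
    have hderiv := (contDiff_iterate_movingDeriv hΛ hc k).differentiable (by simp) t |>.hasDerivAt
    convert! hasDerivAt_mulVec (hF t) hderiv using 1
    rw [movingDeriv, Matrix.mulVec_add, Matrix.mulVec_mulVec, add_comm]

lemma deriv_eq_zero_of_forall_eq_zero {E : Type*} [NormedAddCommGroup E] [NormedSpace ℝ E]
    {f : ℝ → E} {s : Set ℝ} (hs : UniqueDiffOn ℝ s) (hf : Differentiable ℝ f)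
    (hzero : ∀ t ∈ s, f t = 0) {t : ℝ} (ht : t ∈ s) : deriv f t = 0 := by
  rw [← (hf t).derivWithin (hs t ht), derivWithin_congr hzero (hzero t ht), derivWithin_fun_const,
    Pi.zero_apply]

lemma movingDeriv_apply_of_apply_eq_zero {s : Set ℝ} (hs : UniqueDiffOn ℝ s)
    (hc : Differentiable ℝ c) {i : ι} (hzero : ∀ t ∈ s, c t i = 0) {t : ℝ} (ht : t ∈ s) :
    movingDeriv Λ c t i = (Λ t *ᵥ c t) i := by
  have hderiv : deriv c t i = 0 := by
    rw [← (hasDerivAt_pi.1 (hc t).hasDerivAt i).deriv,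
      deriv_eq_zero_of_forall_eq_zero hs (differentiable_pi.1 hc i) hzero ht]
  rw [movingDeriv, Pi.add_apply, hderiv, zero_add]

end MatrixCurves

section Triangular

variable {m : ℕ}

lemma IsSpecialOrthogonal.isUnit_det {Q : Matrix (Fin m) (Fin m) ℝ} (hQ : IsSpecialOrthogonal Q) :
    IsUnit Q.det :=
  hQ.2 ▸ isUnit_one

lemma IsUpperPos.det_pos {R : Matrix (Fin m) (Fin m) ℝ} (hR : IsUpperPos R) : 0 < R.det := by
  rw [Matrix.det_of_isUpperTriangular fun i j hij => hR.1 i j hij]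
  exact Finset.prod_pos fun i _ => hR.2 i

lemma IsUpperPos.mul_apply_zero {R : Matrix (Fin (m + 1)) (Fin (m + 1)) ℝ} (hR : IsUpperPos R)
    (Q : Matrix (Fin (m + 1)) (Fin (m + 1)) ℝ) (i : Fin (m + 1)) :
    (Q * R) i 0 = Q i 0 * R 0 0 := by
  rw [Matrix.mul_apply, Finset.sum_eq_single 0 (fun k _ hk => ?_) (by simp)]
  rw [hR.1 k 0 (Fin.pos_of_ne_zero hk), mul_zero]

lemma sum_sq_col_eq_one_of_orthogonal {Q : Matrix (Fin m) (Fin m) ℝ} (hQ : Qᵀ * Q = 1) (j : Fin m) :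
    ∑ i, Q i j ^ 2 = 1 := by
  simpa [Matrix.mul_apply, sq] using congrFun (congrFun hQ j) j

lemma IsUpperPos.mul_apply_zero_eq {Q R : Matrix (Fin (m + 1)) (Fin (m + 1)) ℝ}
    (hR : IsUpperPos R) (hQ : Qᵀ * Q = 1) (hnorm : ∑ i, (Q * R) i 0 ^ 2 = 1)
    (i : Fin (m + 1)) : (Q * R) i 0 = Q i 0 := by
  have hsq : R 0 0 ^ 2 = 1 := by
    simpa only [hR.mul_apply_zero, mul_pow, ← Finset.sum_mul,
      sum_sq_col_eq_one_of_orthogonal hQ, one_mul] using hnorm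
  rw [hR.mul_apply_zero, (pow_eq_one_iff_of_nonneg (hR.2 0).le two_ne_zero).1 hsq, mul_one]

lemma MemJ.apply_eq_zero_of_succ_lt {M : Matrix (Fin m) (Fin m) ℝ} (hM : MemJ M) {i j : Fin m}
    (hij : (j : ℕ) + 1 < i) : M i j = 0 := by
  have hskew : M i j = -M j i := congrFun (congrFun hM.1 j) i
  rw [hskew, hM.2.1 j i hij, neg_zero]

variable {Λ : ℝ → Matrix (Fin m) (Fin m) ℝ} {c : ℝ → Fin m → ℝ} {s : Set ℝ} {t : ℝ}

lemma movingDeriv_apply_eq_zero (hs : UniqueDiffOn ℝ s) (hc : Differentiable ℝ c) {k : ℕ}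
    (hzero : ∀ t ∈ s, ∀ i : Fin m, k < i → c t i = 0) (ht : t ∈ s)
    (hΛ : ∀ i j : Fin m, (j : ℕ) + 1 < i → Λ t i j = 0) {i : Fin m} (hi : k + 1 < i) :
    movingDeriv Λ c t i = 0 := by
  rw [movingDeriv_apply_of_apply_eq_zero hs hc (fun t ht => hzero t ht i (by omega)) ht,
    Matrix.mulVec, dotProduct]
  refine Finset.sum_eq_zero fun l _ => ?_
  rcases lt_or_ge k l with hl | hl
  · rw [hzero t ht l hl, mul_zero]
  · rw [hΛ i l (by omega), zero_mul]

lemma movingDeriv_apply_succ (hs : UniqueDiffOn ℝ s) (hc : Differentiable ℝ c) {j : Fin m}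
    (hzero : ∀ t ∈ s, ∀ i : Fin m, j < i → c t i = 0) (ht : t ∈ s)
    (hΛ : ∀ i j : Fin m, (j : ℕ) + 1 < i → Λ t i j = 0) {i : Fin m} (hi : (i : ℕ) = j + 1) :
    movingDeriv Λ c t i = Λ t i j * c t j := by
  rw [movingDeriv_apply_of_apply_eq_zero hs hc (fun t ht => hzero t ht i (by omega)) ht,
    Matrix.mulVec, dotProduct]
  refine Finset.sum_eq_single j (fun l _ hlj => ?_) (by simp)
  rcases lt_or_gt_of_ne hlj with hl | hl
  · rw [hΛ i l (by omega), zero_mul]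
  · rw [hzero t ht l hl, mul_zero]

end Triangular

section Frenet

open scoped Matrix.Norms.Frobenius

variable {n : ℕ} {Λ : ℝ → Matrix (Fin (n + 1)) (Fin (n + 1)) ℝ}

/-- The triangular factor of the Frenet decomposition: its `j`-th column holds the coordinates, in
the frame `F`, of the `j`-th derivative of the first vector of a frame with `F' = F Λ`. -/
noncomputable def frenetFactor (Λ : ℝ → Matrix (Fin (n + 1)) (Fin (n + 1)) ℝ) (t : ℝ) :
    Matrix (Fin (n + 1)) (Fin (n + 1)) ℝ :=
  Matrix.of fun i j => (movingDeriv Λ)^[j] (fun _ => Pi.single 0 1) t i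

theorem derivMat_col_zero (hΛ : ContDiff ℝ (⊤ : ℕ∞) Λ)
    {F : ℝ → Matrix (Fin (n + 1)) (Fin (n + 1)) ℝ} (hF : ∀ t, HasDerivAt F (F t * Λ t) t) (t : ℝ) :
    derivMat (n + 1) (fun s => (F s).col 0) t = F t * frenetFactor Λ t := by
  simp only [← Matrix.mulVec_single_one]
  ext i j
  rw [derivMat, Matrix.of_apply, iteratedDeriv_mulVec hΛ hF contDiff_const]
  rfl

lemma iterate_movingDeriv_single_apply_eq_zero {s : Set ℝ} (hs : UniqueDiffOn ℝ s)
    (hsm : ContDiff ℝ (⊤ : ℕ∞) Λ) (hJ : ∀ t ∈ s, MemJ (Λ t)) (k : ℕ) :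
    ∀ t ∈ s, ∀ i : Fin (n + 1), k < i →
      (movingDeriv Λ)^[k] (fun _ => Pi.single 0 1) t i = 0 := by
  induction k with
  | zero => exact fun t _ i hi => Pi.single_eq_of_ne (Fin.pos_iff_ne_zero.1 hi) _
  | succ k ih =>
    intro t ht i hi
    rw [Function.iterate_succ_apply']
    exact movingDeriv_apply_eq_zero hs
      ((contDiff_iterate_movingDeriv hsm contDiff_const k).differentiable (by simp)) ih ht
      (fun _ _ => (hJ t ht).apply_eq_zero_of_succ_lt) hi

lemma iterate_movingDeriv_single_apply_self_pos {s : Set ℝ} (hs : UniqueDiffOn ℝ s)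
    (hsm : ContDiff ℝ (⊤ : ℕ∞) Λ) (hJ : ∀ t ∈ s, MemJ (Λ t)) {t : ℝ} (ht : t ∈ s)
    (i : Fin (n + 1)) : 0 < (movingDeriv Λ)^[i] (fun _ => Pi.single 0 1) t i := by
  induction i using Fin.induction with
  | zero => simp
  | succ i ih =>
    rw [Fin.val_succ, Function.iterate_succ_apply', movingDeriv_apply_succ (j := i.castSucc) hs
      ((contDiff_iterate_movingDeriv hsm contDiff_const i).differentiable (by simp))
      (iterate_movingDeriv_single_apply_eq_zero hs hsm hJ i) ht
      (fun _ _ => (hJ t ht).apply_eq_zero_of_succ_lt) rfl]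
    exact mul_pos ((hJ t ht).2.2 _ _ rfl) ih

theorem isUpperPos_frenetFactor {s : Set ℝ} (hs : UniqueDiffOn ℝ s)
    (hsm : ContDiff ℝ (⊤ : ℕ∞) Λ) (hJ : ∀ t ∈ s, MemJ (Λ t)) {t : ℝ} (ht : t ∈ s) :
    IsUpperPos (frenetFactor Λ t) :=
  ⟨fun i j hij => iterate_movingDeriv_single_apply_eq_zero hs hsm hJ j t ht i hij,
    iterate_movingDeriv_single_apply_self_pos hs hsm hJ ht⟩

theorem exists_isFrenetSolution (hsm : ∀ i j, ContDiff ℝ (⊤ : ℕ∞) fun t => Λ t i j)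
    (hJ : ∀ t ∈ Icc (0 : ℝ) 1, MemJ (Λ t)) : ∃ γ, IsFrenetSolution n Λ γ := by
  have hΛ : ContDiff ℝ (⊤ : ℕ∞) Λ := contDiff_matrix_iff.2 hsm
  set F := peanoBakerSeries Λ
  have hF : ∀ t, HasDerivAt F (F t * Λ t) t := hasDerivAt_peanoBakerSeries hΛ.continuous
  have hF0 : F 0 = 1 := peanoBakerSeries_zero Λ
  have hFsm : ∀ i j, ContDiff ℝ (⊤ : ℕ∞) fun t => F t i j :=
    contDiff_matrix_iff.1 (contDiff_of_hasDerivAt_mul hΛ hF)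
  have hSO : ∀ t ∈ Icc (0 : ℝ) 1, IsSpecialOrthogonal (F t) :=
    isSpecialOrthogonal_of_hasDerivAt_mul (fun t _ => hF t) (fun t ht => (hJ t ht).1)
      (by simp [hF0, IsSpecialOrthogonal])
  have hR : ∀ t ∈ Icc (0 : ℝ) 1, IsUpperPos (frenetFactor Λ t) := fun t ht =>
    isUpperPos_frenetFactor (uniqueDiffOn_Icc zero_lt_one) hΛ hJ ht
  refine ⟨fun t => (F t).col 0, contDiff_pi.2 fun i => hFsm i 0,
    fun t ht => sum_sq_col_eq_one_of_orthogonal (hSO t ht).1 0, fun t ht => ?_, F, hFsm, hF0, hSO,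
    fun t ht => ⟨frenetFactor Λ t, hR t ht, derivMat_col_zero hΛ hF t⟩, fun t ht => ?_⟩
  · rw [derivMat_col_zero hΛ hF, Matrix.det_mul, (hSO t ht).2, one_mul]
    exact (hR t ht).det_pos
  · rw [matDeriv_eq_of_hasDerivAt (hF t),
      Matrix.nonsing_inv_mul_cancel_left _ _ (hSO t ht).isUnit_det]

theorem IsFrenetSolution.exists_frame {γ : ℝ → Fin (n + 1) → ℝ} (hγ : IsFrenetSolution n Λ γ) :
    ∃ F : ℝ → Matrix (Fin (n + 1)) (Fin (n + 1)) ℝ, F 0 = 1 ∧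
      (∀ t ∈ Icc (0 : ℝ) 1, (F t)ᵀ * F t = 1) ∧
      (∀ t ∈ Icc (0 : ℝ) 1, HasDerivAt F (F t * Λ t) t) ∧
      ∀ t ∈ Icc (0 : ℝ) 1, γ t = (F t).col 0 := by
  obtain ⟨-, hnorm, -, F, hFsm, hF0, hSO, hR, hlog⟩ := hγ
  refine ⟨F, hF0, fun t ht => (hSO t ht).1, fun t ht => ?_, fun t ht => funext fun i => ?_⟩
  · have hderiv := ((contDiff_matrix_iff.2 hFsm).differentiable (by simp) t).hasDerivAt
    rw [← hlog t ht, Matrix.mul_nonsing_inv_cancel_left _ _ (hSO t ht).isUnit_det,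
      matDeriv_eq_of_hasDerivAt hderiv]
    exact hderiv
  · obtain ⟨R, hRpos, hfactor⟩ := hR t ht
    have hcol : ∀ i, γ t i = (F t * R) i 0 := fun i => by simp [← hfactor, derivMat]
    rw [hcol]
    refine hRpos.mul_apply_zero_eq (hSO t ht).1 ?_ i
    simpa only [hcol] using hnorm t ht

theorem IsFrenetSolution.eqOn {γ₁ γ₂ : ℝ → Fin (n + 1) → ℝ} (h₁ : IsFrenetSolution n Λ γ₁)
    (h₂ : IsFrenetSolution n Λ γ₂) (hskew : ∀ t ∈ Icc (0 : ℝ) 1, (Λ t)ᵀ = -Λ t) :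
    EqOn γ₁ γ₂ (Icc 0 1) := by
  intro t ht
  obtain ⟨F, hF0, hForth, hF, hγ₁⟩ := h₁.exists_frame
  obtain ⟨G, hG0, -, hG, hγ₂⟩ := h₂.exists_frame
  have hGF : G t * (F t)ᵀ = 1 := by
    simpa [hF0, hG0] using mul_transpose_eq_of_hasDerivAt_mul hG hF hskew t ht
  have hFG : F t = G t :=
    calc F t = G t * (F t)ᵀ * F t := by rw [hGF, one_mul]
      _ = G t := by rw [mul_assoc, hForth t ht, mul_one]
  rw [hγ₁ t ht, hγ₂ t ht, hFG]

end Frenet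

/-- Given a smooth `Λ : [0,1] → 𝔍_{n+1}`, there is a unique positive locally convex curve
`γ : [0,1] → Sⁿ` whose Frenet frame curve starts at the identity and has logarithmic
derivative `Λ`. -/
theorem exists_unique_curve_with_log_derivative (n : ℕ) (hn : 2 ≤ n)
    (Λ : ℝ → Matrix (Fin (n+1)) (Fin (n+1)) ℝ)
    (hsm : ∀ i j : Fin (n+1), ContDiff ℝ (⊤ : ℕ∞) fun t => Λ t i j)
    (hJ : ∀ t ∈ Icc (0 : ℝ) 1, MemJ (Λ t)) :
    (∃ γ : ℝ → Fin (n+1) → ℝ, IsFrenetSolution n Λ γ) ∧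
    (∀ γ₁ γ₂ : ℝ → Fin (n+1) → ℝ, IsFrenetSolution n Λ γ₁ → IsFrenetSolution n Λ γ₂ →
      ∀ t ∈ Icc (0 : ℝ) 1, γ₁ t = γ₂ t) :=
  ⟨exists_isFrenetSolution hsm hJ, fun _ _ h₁ h₂ => h₁.eqOn h₂ fun t ht => (hJ t ht).1⟩
end

section
/- Let Γ_l, Γ_r : [0,1] → 𝕊³ be smooth curves of unit quaternions whose logarithmic derivatives have the form Γ_l(t)⁻¹Γ_l'(t) = b_l(t)·i + d(t)·k and Γ_r(t)⁻¹Γ_r'(t) = b_r(t)·i + d(t)·k with b_l(t) > b_r(t) and d(t) > 0 for all t, and let γ(t) = Γ_l(t)·(conjugate of Γ_r(t)), a curve of unit quaternions, identified with a curve in S³ ⊂ ℝ⁴ via coordinates in the basis (1, i, j, k). Then for each t ∈ [0,1], det(γ(t), γ'(t), γ''(t), γ'''(t)) > 0 if and only if b_l(t) + b_r(t) > 0. Consequently, γ is positive locally convex if and only if b_l(t) > |b_r(t)| for all t ∈ [0,1]. -/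
open Set Quaternion

/-- The quaternion with the given coordinates in the basis `(1, i, j, k)`. -/
noncomputable def quatMk (a b c d : ℝ) : Quaternion ℝ := ⟨a, b, c, d⟩

/-- Coordinates of a quaternion in the basis `(1, i, j, k)`. -/
noncomputable def quatCoord (q : Quaternion ℝ) : Fin 4 → ℝ := ![q.re, q.imI, q.imJ, q.imK]

/-- Determinant of the coordinates of the curve `γ : ℝ → ℍ ≅ ℝ⁴` and of its first
three derivatives at `t` (columns `γ, γ', γ'', γ'''`). -/
noncomputable def qdet4 (γ : ℝ → Quaternion ℝ) (t : ℝ) : ℝ :=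
  (Matrix.of fun i j : Fin 4 => quatCoord (iteratedDeriv (j : ℕ) γ t) i).det

/-!
Let `A = b_l i + d k` and `B = b_r i + d k` be the logarithmic derivatives, and write
`γ^(n) = Γ_l X_n Γ̄_r`, so that `X_0 = 1` and `X_{n+1} = X_n' + A X_n - X_n B`. In the basis
`(1, i, j, k)` the map `X ↦ A X - X B` is a tridiagonal skew-symmetric matrix with subdiagonal
`b_l - b_r`, `2 d`, `b_l + b_r`: these are the Frenet data of `γ`. Hence the matrix with columns
`X_0, X_1, X_2, X_3` is upper triangular, and as left and right multiplication by unit quaternions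
have determinant `1`, `det(γ, γ', γ'', γ''') = v (v κ) (v κ τ)` with `v = b_l - b_r`, `κ = 2 d`,
`τ = b_l + b_r`. The term `X_n'` never contributes on or below the diagonal, because the
coordinates of `X_n` beyond the `n`-th vanish identically.
-/

section Hessenberg

open Matrix

/-- An upper Hessenberg matrix: all entries below the subdiagonal vanish. -/
def IsUpperHessenberg {R : Type*} [Zero R] {n : ℕ} (A : Matrix (Fin n) (Fin n) R) : Prop :=
  ∀ i j : Fin n, (j : ℕ) + 1 < i → A i j = 0

/-- The coordinate vectors `x 0, …, x n` of a curve and its first `n` derivatives with respect to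
a moving frame. The frame enters only through its connection matrix `M`, the coordinates of a
derivative being `x' + M x`, with `x'` taken within the parameter set `S`. -/
def IsMovingFrameJet {𝕜 : Type*} [NontriviallyNormedField 𝕜] {n : ℕ} (S : Set 𝕜)
    (M : 𝕜 → Matrix (Fin (n + 1)) (Fin (n + 1)) 𝕜) (x : Fin (n + 1) → 𝕜 → Fin (n + 1) → 𝕜) :
    Prop :=
  ∀ k : Fin n, ∀ t ∈ S,
    HasDerivWithinAt (x k.castSucc) (x k.succ t - M t *ᵥ x k.castSucc t) S t

variable {𝕜 : Type*} [NontriviallyNormedField 𝕜] {n : ℕ} {S : Set 𝕜}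
  {M : 𝕜 → Matrix (Fin (n + 1)) (Fin (n + 1)) 𝕜} {x : Fin (n + 1) → 𝕜 → Fin (n + 1) → 𝕜} {t : 𝕜}

theorem eq_zero_of_hasDerivWithinAt_of_eqOn_zero {E : Type*} [NormedAddCommGroup E]
    [NormedSpace 𝕜 E] {f : 𝕜 → E} {f' : E} (hS : UniqueDiffWithinAt 𝕜 S t) (ht : t ∈ S)
    (hf : HasDerivWithinAt f f' S t) (hf₀ : EqOn f 0 S) : f' = 0 :=
  hS.eq_deriv _ hf ((hasDerivWithinAt_const t S 0).congr hf₀ (hf₀ ht))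

theorem IsMovingFrameJet.apply_succ_eq_mulVec (hx : IsMovingFrameJet S M x)
    (hS : UniqueDiffOn 𝕜 S) {k : Fin n} {i : Fin (n + 1)}
    (hi : ∀ s ∈ S, x k.castSucc s i = 0) (ht : t ∈ S) :
    x k.succ t i = (M t *ᵥ x k.castSucc t) i :=
  sub_eq_zero.1 <| eq_zero_of_hasDerivWithinAt_of_eqOn_zero (f := fun s => x k.castSucc s i)
    (hS t ht) ht (hasDerivWithinAt_pi.1 (hx k t ht) i) hi

theorem IsMovingFrameJet.apply_eq_zero_of_lt (hx : IsMovingFrameJet S M x)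
    (hS : UniqueDiffOn 𝕜 S) (hM : ∀ s ∈ S, IsUpperHessenberg (M s))
    (hx₀ : ∀ s ∈ S, ∀ i ≠ 0, x 0 s i = 0) (k : Fin (n + 1)) :
    ∀ t ∈ S, ∀ i, k < i → x k t i = 0 := by
  induction k using Fin.induction with
  | zero => exact fun t ht i hi => hx₀ t ht i hi.ne'
  | succ k ih =>
    intro t ht i hi
    have hi' : k.castSucc < i := k.castSucc_lt_succ.trans hi
    rw [hx.apply_succ_eq_mulVec hS (fun s hs => ih s hs i hi') ht, mulVec, dotProduct]
    refine Finset.sum_eq_zero fun j _ => ?_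
    rcases lt_or_ge k.castSucc j with hj | hj
    · rw [ih t ht j hj, mul_zero]
    · rw [hM t ht i j ((Nat.succ_le_succ hj).trans_lt hi), zero_mul]

theorem IsMovingFrameJet.apply_succ_self (hx : IsMovingFrameJet S M x)
    (hS : UniqueDiffOn 𝕜 S) (hM : ∀ s ∈ S, IsUpperHessenberg (M s))
    (hx₀ : ∀ s ∈ S, ∀ i ≠ 0, x 0 s i = 0) (ht : t ∈ S) (k : Fin n) :
    x k.succ t k.succ = M t k.succ k.castSucc * x k.castSucc t k.castSucc := by
  have hzero := hx.apply_eq_zero_of_lt hS hM hx₀ k.castSucc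
  rw [hx.apply_succ_eq_mulVec hS (fun s hs => hzero s hs _ k.castSucc_lt_succ) ht, mulVec,
    dotProduct]
  refine Finset.sum_eq_single _ (fun j _ hj => ?_) (fun h => absurd (Finset.mem_univ _) h)
  rcases lt_or_gt_of_ne hj with hj | hj
  · rw [hM t ht _ _ (Nat.succ_lt_succ hj), zero_mul]
  · rw [hzero t ht j hj, mul_zero]

theorem IsMovingFrameJet.det_eq_prod (hx : IsMovingFrameJet S M x)
    (hS : UniqueDiffOn 𝕜 S) (hM : ∀ s ∈ S, IsUpperHessenberg (M s))
    (hx₀ : ∀ s ∈ S, ∀ i ≠ 0, x 0 s i = 0) (ht : t ∈ S) :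
    (Matrix.of fun i j => x j t i).det = ∏ k, x k t k :=
  det_of_isUpperTriangular fun _ _ hij => hx.apply_eq_zero_of_lt hS hM hx₀ _ t ht _ hij

end Hessenberg

theorem hasDerivAt_star_mul_mul {𝕜 A : Type*} [NontriviallyNormedField 𝕜] [StarRing 𝕜]
    [TrivialStar 𝕜] [NormedRing A] [NormedAlgebra 𝕜 A] [StarRing A] [StarModule 𝕜 A]
    [ContinuousStar A] {L R Y : 𝕜 → A} {a b Y' : A} {t : 𝕜}
    (hL : HasDerivAt L (L t * a) t) (hR : HasDerivAt R (R t * b) t) (hY : HasDerivAt Y Y' t) :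
    HasDerivAt (fun s => star (L s) * Y s * R s)
      (star (L t) * Y' * R t + star a * (star (L t) * Y t * R t)
        + star (L t) * Y t * R t * b) t := by
  refine ((hL.star.mul hY).mul hR).congr_deriv ?_
  rw [Pi.mul_apply, star_mul]
  noncomm_ring

section Quaternion

instance starModule_quaternion {R : Type*} [CommRing R] [StarRing R] [TrivialStar R] :
    StarModule R ℍ[R] :=
  ⟨fun r q => by rw [Quaternion.star_smul, star_trivial r]⟩

@[simp] theorem re_quatMk (a b c d : ℝ) : (quatMk a b c d).re = a := rfl
@[simp] theorem imI_quatMk (a b c d : ℝ) : (quatMk a b c d).imI = b := rfl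
@[simp] theorem imJ_quatMk (a b c d : ℝ) : (quatMk a b c d).imJ = c := rfl
@[simp] theorem imK_quatMk (a b c d : ℝ) : (quatMk a b c d).imK = d := rfl

theorem star_quatMk_zero (b c d : ℝ) : star (quatMk 0 b c d) = -quatMk 0 b c d := by
  ext <;> simp

/-- The coordinates `quatCoord` as a linear isomorphism `ℍ ≃ ℝ⁴`. -/
noncomputable def quatCoordEquiv : ℍ ≃ₗ[ℝ] (Fin 4 → ℝ) where
  toFun := quatCoord
  invFun v := quatMk (v 0) (v 1) (v 2) (v 3)
  map_add' p q := by ext i; fin_cases i <;> simp [quatCoord]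
  map_smul' r q := by ext i; fin_cases i <;> simp [quatCoord]
  left_inv _ := rfl
  right_inv v := by ext i; fin_cases i <;> rfl

theorem quatCoordEquiv_apply (q : ℍ) : quatCoordEquiv q = quatCoord q := rfl

theorem quatCoordEquiv_symm_apply (v : Fin 4 → ℝ) :
    quatCoordEquiv.symm v = quatMk (v 0) (v 1) (v 2) (v 3) := rfl

/-- The basis `(1, i, j, k)` of `ℍ`, whose determinant is the one in `qdet4`. -/
noncomputable def quatBasis : Module.Basis (Fin 4) ℝ ℍ := .ofEquivFun quatCoordEquiv

theorem quatBasis_det_apply (y : Fin 4 → ℍ) :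
    quatBasis.det y = (Matrix.of fun i j => quatCoord (y j) i).det := rfl

theorem quatBasis_apply (i : Fin 4) :
    quatBasis i = ![1, quatMk 0 1 0 0, quatMk 0 0 1 0, quatMk 0 0 0 1] i := by
  rw [quatBasis, Module.Basis.coe_ofEquivFun]
  simp only [quatCoordEquiv_symm_apply]
  fin_cases i <;> ext <;> simp

theorem quatBasis_repr_apply (q : ℍ) : quatBasis.repr q = quatCoord q := rfl

theorem det_mulLeft_quaternion (p : ℍ) :
    LinearMap.det (LinearMap.mulLeft ℝ p) = normSq p ^ 2 := by
  have hp : LinearMap.toMatrix quatBasis quatBasis (LinearMap.mulLeft ℝ p) =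
      !![p.re, -p.imI, -p.imJ, -p.imK;
         p.imI, p.re, -p.imK, p.imJ;
         p.imJ, p.imK, p.re, -p.imI;
         p.imK, -p.imJ, p.imI, p.re] := by
    ext i j
    rw [LinearMap.toMatrix_apply, quatBasis_apply, quatBasis_repr_apply]
    fin_cases i <;> fin_cases j <;> simp [quatCoord]
  rw [← LinearMap.det_toMatrix quatBasis, hp]
  simp [Matrix.det_succ_row_zero, Fin.sum_univ_succ, Fin.succAbove, normSq_def']
  ring

theorem det_mulRight_quaternion (q : ℍ) :
    LinearMap.det (LinearMap.mulRight ℝ q) = normSq q ^ 2 := by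
  let e : ℍ ≃ₗ[ℝ] ℍ := (starL' ℝ : ℍ ≃L[ℝ] ℍ).toLinearEquiv
  have hq : LinearMap.mulRight ℝ q = e ∘ₗ LinearMap.mulLeft ℝ (star q) ∘ₗ e.symm := by
    ext1 y
    simp [e]
  rw [hq, LinearMap.det_conj, det_mulLeft_quaternion, normSq_star]

theorem quatBasis_det_mul_mul (p q : ℍ) (y : Fin 4 → ℍ) :
    quatBasis.det (fun j => p * y j * q) = (normSq p * normSq q) ^ 2 * quatBasis.det y := by
  have h := quatBasis.det_comp (LinearMap.mulRight ℝ q ∘ₗ LinearMap.mulLeft ℝ p) y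
  rwa [LinearMap.det_comp, det_mulLeft_quaternion, det_mulRight_quaternion, ← mul_pow,
    mul_comm (normSq q)] at h

theorem hasDerivAt_quatCoord {X : ℝ → ℍ} {X' : ℍ} {t : ℝ} (hX : HasDerivAt X X' t) :
    HasDerivAt (fun s => quatCoord (X s)) (quatCoord X') t :=
  quatCoordEquiv.toContinuousLinearEquiv.hasFDerivAt.comp_hasDerivAt t hX

/-- The connection matrix of a Frenet frame in `S³ ⊂ ℝ⁴` with speed `v` whose geodesic curvature
and torsion are `κ / v` and `τ / v`. -/
def frenetMatrix (v κ τ : ℝ) : Matrix (Fin 4) (Fin 4) ℝ :=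
  !![0, -v, 0, 0;
     v, 0, -κ, 0;
     0, κ, 0, -τ;
     0, 0, τ, 0]

theorem isUpperHessenberg_frenetMatrix (v κ τ : ℝ) :
    IsUpperHessenberg (frenetMatrix v κ τ) := by
  intro i j hij
  fin_cases i <;> fin_cases j <;> first | rfl | simp at hij

open Matrix in
theorem quatCoord_quatMk_mul_sub_mul_quatMk (a b d : ℝ) (q : ℍ) :
    quatCoord (quatMk 0 a 0 d * q - q * quatMk 0 b 0 d) =
      frenetMatrix (a - b) (2 * d) (a + b) *ᵥ quatCoord q := by
  ext i
  fin_cases i <;>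
    simp [quatCoord, frenetMatrix, mulVec, dotProduct, Fin.sum_univ_four] <;> ring

/-- The coordinates of the `k`-th derivative of `γ = Γl * star Γr` in the moving frame
`Γl * (1, i, j, k) * star Γr`. Using `star` in place of the inverse makes them, for non-unit curves,
too large by the factor `normSq Γl * normSq Γr`. -/
noncomputable def frameJet (Γl Γr : ℝ → ℍ) (k : Fin 4) (t : ℝ) : Fin 4 → ℝ :=
  quatCoord (star (Γl t) * iteratedDeriv k (fun s => Γl s * star (Γr s)) t * Γr t)

variable {S : Set ℝ} {Γl Γr : ℝ → ℍ} {bl br d : ℝ → ℝ} {t : ℝ}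

theorem isMovingFrameJet_frameJet (hl : ContDiff ℝ 3 Γl) (hr : ContDiff ℝ 3 Γr)
    (hld : ∀ s ∈ S, deriv Γl s = Γl s * quatMk 0 (bl s) 0 (d s))
    (hrd : ∀ s ∈ S, deriv Γr s = Γr s * quatMk 0 (br s) 0 (d s)) :
    IsMovingFrameJet S (fun s => frenetMatrix (bl s - br s) (2 * d s) (bl s + br s))
      (frameJet Γl Γr) := by
  intro k t ht
  have hγ : ContDiff ℝ 3 (fun s => Γl s * star (Γr s)) :=
    hl.mul ((starL' ℝ : ℍ ≃L[ℝ] ℍ).contDiff.comp hr)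
  have hL := hld t ht ▸ (hl.differentiable three_ne_zero t).hasDerivAt
  have hR := hrd t ht ▸ (hr.differentiable three_ne_zero t).hasDerivAt
  have hY := (hγ.differentiable_iteratedDeriv k (by exact_mod_cast k.isLt) t).hasDerivAt
  rw [← iteratedDeriv_succ] at hY
  refine (hasDerivAt_quatCoord (hasDerivAt_star_mul_mul hL hR hY)).hasDerivWithinAt.congr_deriv ?_
  dsimp only [frameJet]
  rw [← quatCoord_quatMk_mul_sub_mul_quatMk, star_quatMk_zero, Fin.val_succ, Fin.val_castSucc]
  simp only [← quatCoordEquiv_apply, ← map_sub]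
  congr 1
  noncomm_ring

theorem frameJet_zero (Γl Γr : ℝ → ℍ) (t : ℝ) :
    frameJet Γl Γr 0 t = ![normSq (Γl t) * normSq (Γr t), 0, 0, 0] := by
  have h : star (Γl t) * (Γl t * star (Γr t)) * Γr t =
      ((normSq (Γl t) * normSq (Γr t) : ℝ) : ℍ) := by
    rw [coe_mul, ← star_mul_self, ← star_mul_self]
    noncomm_ring
  simp [frameJet, h, quatCoord]

theorem det_frameJet (Γl Γr : ℝ → ℍ) (t : ℝ) :
    (Matrix.of fun i j => frameJet Γl Γr j t i).det =
      (normSq (Γl t) * normSq (Γr t)) ^ 2 * qdet4 (fun s => Γl s * star (Γr s)) t := by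
  have h := quatBasis_det_mul_mul (star (Γl t)) (Γr t)
    (fun j => iteratedDeriv j (fun s => Γl s * star (Γr s)) t)
  simpa only [normSq_star, quatBasis_det_apply, qdet4, frameJet] using h

theorem qdet4_mul_star (hS : UniqueDiffOn ℝ S) (hl : ContDiff ℝ 3 Γl) (hr : ContDiff ℝ 3 Γr)
    (hld : ∀ s ∈ S, deriv Γl s = Γl s * quatMk 0 (bl s) 0 (d s))
    (hrd : ∀ s ∈ S, deriv Γr s = Γr s * quatMk 0 (br s) 0 (d s))
    (ht : t ∈ S) (hlt : Γl t ≠ 0) (hrt : Γr t ≠ 0) :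
    qdet4 (fun s => Γl s * star (Γr s)) t =
      (normSq (Γl t) * normSq (Γr t)) ^ 2 *
        (4 * (bl t - br t) ^ 3 * d t ^ 2 * (bl t + br t)) := by
  have hx := isMovingFrameJet_frameJet hl hr hld hrd
  have hM : ∀ s ∈ S, IsUpperHessenberg (frenetMatrix (bl s - br s) (2 * d s) (bl s + br s)) :=
    fun s _ => isUpperHessenberg_frenetMatrix _ _ _
  have hx₀ : ∀ s ∈ S, ∀ i ≠ 0, frameJet Γl Γr 0 s i = 0 := by
    intro s _ i hi
    rw [frameJet_zero]
    fin_cases i <;> simp at hi ⊢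
  have hdet := hx.det_eq_prod hS hM hx₀ ht
  have hdiag := hx.apply_succ_self hS hM hx₀ ht
  have h₀ : frameJet Γl Γr 0 t 0 = normSq (Γl t) * normSq (Γr t) := by
    rw [frameJet_zero]; rfl
  have h₁ : frameJet Γl Γr 1 t 1 = (bl t - br t) * frameJet Γl Γr 0 t 0 := hdiag 0
  have h₂ : frameJet Γl Γr 2 t 2 = 2 * d t * frameJet Γl Γr 1 t 1 := hdiag 1
  have h₃ : frameJet Γl Γr 3 t 3 = (bl t + br t) * frameJet Γl Γr 2 t 2 := hdiag 2
  rw [det_frameJet, Fin.prod_univ_four, h₃, h₂, h₁, h₀] at hdet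
  refine mul_left_cancel₀ (pow_ne_zero 2 (mul_ne_zero (normSq_ne_zero.2 hlt)
    (normSq_ne_zero.2 hrt))) (hdet.trans ?_)
  ring

end Quaternion

theorem locally_convex_iff_left_right_curvatures_general {S : Set ℝ} (hS : UniqueDiffOn ℝ S)
    {Γl Γr : ℝ → ℍ} {bl br d : ℝ → ℝ} (hl : ContDiff ℝ 3 Γl) (hr : ContDiff ℝ 3 Γr)
    (hl₀ : ∀ t ∈ S, Γl t ≠ 0) (hr₀ : ∀ t ∈ S, Γr t ≠ 0)
    (hld : ∀ t ∈ S, deriv Γl t = Γl t * quatMk 0 (bl t) 0 (d t))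
    (hrd : ∀ t ∈ S, deriv Γr t = Γr t * quatMk 0 (br t) 0 (d t))
    (hb : ∀ t ∈ S, br t < bl t) (hd : ∀ t ∈ S, d t ≠ 0) :
    (∀ t ∈ S, (0 < qdet4 (fun s => Γl s * star (Γr s)) t ↔ 0 < bl t + br t)) ∧
    ((∀ t ∈ S, 0 < qdet4 (fun s => Γl s * star (Γr s)) t) ↔ ∀ t ∈ S, |br t| < bl t) := by
  have pointwise : ∀ t ∈ S,
      (0 < qdet4 (fun s => Γl s * star (Γr s)) t ↔ 0 < bl t + br t) := by
    intro t ht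
    rw [qdet4_mul_star hS hl hr hld hrd ht (hl₀ t ht) (hr₀ t ht), ← mul_assoc]
    have := sub_pos.2 (hb t ht)
    have := hd t ht
    have := normSq_ne_zero.2 (hl₀ t ht)
    have := normSq_ne_zero.2 (hr₀ t ht)
    exact mul_pos_iff_of_pos_left (by positivity)
  refine ⟨pointwise, forall₂_congr fun t ht => ?_⟩
  rw [pointwise t ht, abs_lt, and_iff_left (hb t ht), neg_lt_iff_pos_add']

/-- For the curve `γ = Γ_l Γ̄_r` arising from a pair with logarithmic derivatives
`b_l i + d k` and `b_r i + d k` (with `b_l > b_r`, `d > 0`),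
`det(γ, γ', γ'', γ''') > 0` iff `b_l + b_r > 0`; consequently `γ` is positive locally
convex iff `b_l > |b_r|` on `[0,1]`. -/
theorem locally_convex_iff_left_right_curvatures
    (Γl Γr : ℝ → Quaternion ℝ) (bl br d : ℝ → ℝ)
    (hl : ContDiff ℝ (⊤ : ℕ∞) Γl) (hr : ContDiff ℝ (⊤ : ℕ∞) Γr)
    (hul : ∀ t ∈ Icc (0 : ℝ) 1, ‖Γl t‖ = 1) (hur : ∀ t ∈ Icc (0 : ℝ) 1, ‖Γr t‖ = 1)
    (hld : ∀ t ∈ Icc (0 : ℝ) 1, (Γl t)⁻¹ * deriv Γl t = quatMk 0 (bl t) 0 (d t))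
    (hrd : ∀ t ∈ Icc (0 : ℝ) 1, (Γr t)⁻¹ * deriv Γr t = quatMk 0 (br t) 0 (d t))
    (hb : ∀ t ∈ Icc (0 : ℝ) 1, br t < bl t) (hd : ∀ t ∈ Icc (0 : ℝ) 1, 0 < d t) :
    (∀ t ∈ Icc (0 : ℝ) 1,
        (0 < qdet4 (fun s => Γl s * star (Γr s)) t ↔ 0 < bl t + br t)) ∧
    ((∀ t ∈ Icc (0 : ℝ) 1, 0 < qdet4 (fun s => Γl s * star (Γr s)) t) ↔
      ∀ t ∈ Icc (0 : ℝ) 1, |br t| < bl t) := by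
  have hl₀ : ∀ t ∈ Icc (0 : ℝ) 1, Γl t ≠ 0 := fun t ht => norm_ne_zero_iff.1 (by simp [hul t ht])
  have hr₀ : ∀ t ∈ Icc (0 : ℝ) 1, Γr t ≠ 0 := fun t ht => norm_ne_zero_iff.1 (by simp [hur t ht])
  exact locally_convex_iff_left_right_curvatures_general uniqueDiffOn_Icc_zero_one
    (contDiff_infty.1 hl 3) (contDiff_infty.1 hr 3) hl₀ hr₀
    (fun t ht => (inv_mul_eq_iff_eq_mul₀ (hl₀ t ht)).1 (hld t ht))
    (fun t ht => (inv_mul_eq_iff_eq_mul₀ (hr₀ t ht)).1 (hrd t ht)) hb fun t ht => (hd t ht).ne'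
end

section
/- Let Γ : [0,1] → 𝕊³ be a smooth curve of unit quaternions whose logarithmic derivative has the form Γ(t)⁻¹Γ'(t) = b(t)·i + d(t)·k with d(t) > 0 for all t. Then the curve γ(t) = Γ(t)·i·(conjugate of Γ(t)), which takes values in the unit sphere S² of Im ℍ ≅ ℝ³, satisfies for all t ∈ [0,1]: ‖γ'(t)‖ = 2 d(t) and det(γ(t), γ'(t), γ''(t)) = 8 d(t)² b(t). In particular γ is positive locally convex if and only if b(t) > 0 for all t. -/
open Set Quaternion

/-- The quaternion `i`. -/
noncomputable def quatI : Quaternion ℝ := quatMk 0 1 0 0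

/-- Coordinates of an imaginary quaternion in the basis `(i, j, k)` of `Im ℍ ≅ ℝ³`. -/
noncomputable def imCoord (q : Quaternion ℝ) : Fin 3 → ℝ := ![q.imI, q.imJ, q.imK]

/-- Determinant of the `3×3` matrix whose columns are the `(i, j, k)`-coordinates of the
curve `γ : ℝ → Im ℍ ≅ ℝ³` and of its first two derivatives at `t`. -/
noncomputable def imdet3 (γ : ℝ → Quaternion ℝ) (t : ℝ) : ℝ :=
  (Matrix.of fun i j : Fin 3 => imCoord (iteratedDeriv (j : ℕ) γ t) i).det

/-!
Write `Γ' = Γ ω`. Since `ω` is imaginary, differentiating `Γ p Γ̄` amounts to applying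
`p ↦ ⁅ω, p⁆ + p'` in the moving frame `Γ · Γ̄`. For `ω = b i + d k`, starting from `p = i`, this
gives first `2 d j` and then `-4 d² i + 2 d' j + 4 b d k`. Conjugation by `Γ` multiplies norms by
`‖Γ‖²` and determinants on `Im ℍ` by `‖Γ‖⁶`, so speed and determinant can be read off from these
coordinates.
-/

section ConjugatedDerivative

variable {𝕜 A : Type*} [NontriviallyNormedField 𝕜] [StarRing 𝕜] [TrivialStar 𝕜]
  [NormedRing A] [NormedAlgebra 𝕜 A] [StarRing A] [StarModule 𝕜 A] [ContinuousStar A]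

theorem hasDerivWithinAt_mul_mul_star {g p : 𝕜 → A} {ω p' : A} {S : Set 𝕜} {t : 𝕜}
    (hg : HasDerivWithinAt g (g t * ω) S t) (hp : HasDerivWithinAt p p' S t)
    (hω : star ω = -ω) :
    HasDerivWithinAt (fun s => g s * p s * star (g s))
      (g t * (⁅ω, p t⁆ + p') * star (g t)) S t := by
  refine ((hg.mul hp).mul hg.star).congr_deriv ?_
  rw [Pi.mul_apply, star_mul, hω, Ring.lie_def]
  noncomm_ring

end ConjugatedDerivative

section Coordinates

theorem quatMk_add_quatMk (a b c d a' b' c' d' : ℝ) :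
    quatMk a b c d + quatMk a' b' c' d' = quatMk (a + a') (b + b') (c + c') (d + d') := rfl

theorem lie_quatMk (a b c d a' b' c' d' : ℝ) :
    ⁅quatMk a b c d, quatMk a' b' c' d'⁆ =
      quatMk 0 (2 * (c * d' - d * c')) (2 * (d * b' - b * d')) (2 * (b * c' - c * b')) := by
  ext <;> simp only [Ring.lie_def, re_sub, imI_sub, imJ_sub, imK_sub, re_mul, imI_mul, imJ_mul,
    imK_mul, re_quatMk, imI_quatMk, imJ_quatMk, imK_quatMk] <;> ring

theorem norm_quatMk (a b c d : ℝ) :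
    ‖quatMk a b c d‖ = √(a ^ 2 + b ^ 2 + c ^ 2 + d ^ 2) := by
  rw [← Real.sqrt_mul_self (norm_nonneg _), ← normSq_eq_norm_mul_self, normSq_def']
  rfl

theorem hasDerivWithinAt_quatMk {a b c d : ℝ → ℝ} {a' b' c' d' : ℝ} {S : Set ℝ} {t : ℝ}
    (ha : HasDerivWithinAt a a' S t) (hb : HasDerivWithinAt b b' S t)
    (hc : HasDerivWithinAt c c' S t) (hd : HasDerivWithinAt d d' S t) :
    HasDerivWithinAt (fun s => quatMk (a s) (b s) (c s) (d s)) (quatMk a' b' c' d') S t := by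
  have quatMk_eq_sum (w x y z : ℝ) : quatMk w x y z = w • quatMk 1 0 0 0 + x • quatMk 0 1 0 0
      + y • quatMk 0 0 1 0 + z • quatMk 0 0 0 1 := by ext <;> simp
  simp only [quatMk_eq_sum (a _), quatMk_eq_sum a']
  exact (((ha.smul_const _).add (hb.smul_const _)).add (hc.smul_const _)).add (hd.smul_const _)

end Coordinates

section Determinant

/-- The matrix whose columns are the `(i, j, k)`-coordinates of a family of quaternions, as in
`imdet3`. -/
noncomputable def imMatrix {ι : Type*} (v : ι → ℍ[ℝ]) : Matrix (Fin 3) ι ℝ :=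
  Matrix.of fun i j => imCoord (v j) i

/-- The Euler–Rodrigues matrix of `g`: the matrix of `q ↦ g q ḡ` on `Im ℍ` in the basis
`(i, j, k)`. It is a rotation when `‖g‖ = 1`, and no normalization is built in otherwise. -/
def eulerRodriguesMatrix (g : ℍ[ℝ]) : Matrix (Fin 3) (Fin 3) ℝ :=
  !![g.re ^ 2 + g.imI ^ 2 - g.imJ ^ 2 - g.imK ^ 2, 2 * (g.imI * g.imJ - g.re * g.imK),
      2 * (g.imI * g.imK + g.re * g.imJ);
    2 * (g.imI * g.imJ + g.re * g.imK), g.re ^ 2 - g.imI ^ 2 + g.imJ ^ 2 - g.imK ^ 2,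
      2 * (g.imJ * g.imK - g.re * g.imI);
    2 * (g.imI * g.imK - g.re * g.imJ), 2 * (g.imJ * g.imK + g.re * g.imI),
      g.re ^ 2 - g.imI ^ 2 - g.imJ ^ 2 + g.imK ^ 2]

theorem det_eulerRodriguesMatrix (g : ℍ[ℝ]) : (eulerRodriguesMatrix g).det = ‖g‖ ^ 6 := by
  have norm_pow_six : ‖g‖ ^ 6 = normSq g ^ 3 := by rw [normSq_eq_norm_mul_self]; ring
  rw [norm_pow_six, normSq_def', eulerRodriguesMatrix, Matrix.det_fin_three]
  simp only [Matrix.of_apply, Matrix.cons_val]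
  ring

theorem imCoord_mul_mul_star (g q : ℍ[ℝ]) :
    imCoord (g * q * star g) = (eulerRodriguesMatrix g).mulVec (imCoord q) := by
  ext i
  fin_cases i <;> simp only [imCoord, eulerRodriguesMatrix, Matrix.mulVec, dotProduct,
    Fin.sum_univ_three, Fin.zero_eta, Fin.mk_one, Fin.reduceFinMk, Matrix.of_apply,
    Matrix.cons_val, re_mul, imI_mul, imJ_mul, imK_mul, re_star, imI_star, imJ_star,
    imK_star] <;> ring

theorem imMatrix_mul_mul_star {ι : Type*} (g : ℍ[ℝ]) (v : ι → ℍ[ℝ]) :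
    imMatrix (fun j => g * v j * star g) = eulerRodriguesMatrix g * imMatrix v := by
  ext i j
  exact congrFun (imCoord_mul_mul_star g (v j)) i

theorem det_imMatrix_mul_mul_star (g : ℍ[ℝ]) (v : Fin 3 → ℍ[ℝ]) :
    (imMatrix fun j => g * v j * star g).det = ‖g‖ ^ 6 * (imMatrix v).det := by
  rw [imMatrix_mul_mul_star, Matrix.det_mul, det_eulerRodriguesMatrix]

end Determinant

section ProjectedCurve

instance : StarModule ℝ ℍ[ℝ] := ⟨Quaternion.star_smul⟩

/-- The curve `Γ i Γ̄` in `Im ℍ`, which is the projection of `Γ` to `S²` when `‖Γ‖ = 1`. -/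
noncomputable def projectedCurve (Γ : ℝ → ℍ[ℝ]) (t : ℝ) : ℍ[ℝ] := Γ t * quatI * star (Γ t)

variable {Γ : ℝ → ℍ[ℝ]} {b d : ℝ → ℝ} {S : Set ℝ} {t : ℝ}

theorem contDiff_projectedCurve {n : WithTop ℕ∞} (hΓ : ContDiff ℝ n Γ) :
    ContDiff ℝ n (projectedCurve Γ) :=
  (hΓ.mul contDiff_const).mul ((starL' ℝ : ℍ[ℝ] ≃L[ℝ] ℍ[ℝ]).contDiff.comp hΓ)

theorem hasDerivAt_mul_of_inv_mul_deriv_eq {ω : ℍ[ℝ]} (hΓ : DifferentiableAt ℝ Γ t)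
    (hne : Γ t ≠ 0) (hlog : (Γ t)⁻¹ * deriv Γ t = ω) : HasDerivAt Γ (Γ t * ω) t := by
  rw [← hlog, mul_inv_cancel_left₀ hne]
  exact hΓ.hasDerivAt

theorem deriv_projectedCurve {β δ : ℝ} (hΓ : DifferentiableAt ℝ Γ t) (hne : Γ t ≠ 0)
    (hlog : (Γ t)⁻¹ * deriv Γ t = quatMk 0 β 0 δ) :
    deriv (projectedCurve Γ) t = Γ t * quatMk 0 0 (2 * δ) 0 * star (Γ t) := by
  have hderiv := hasDerivWithinAt_mul_mul_star
    (hasDerivAt_mul_of_inv_mul_deriv_eq hΓ hne hlog).hasDerivWithinAt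
    (hasDerivWithinAt_const t univ quatI) (star_quatMk_zero β 0 δ)
  have lie_i : ⁅quatMk 0 β 0 δ, quatI⁆ = quatMk 0 0 (2 * δ) 0 := by
    simp [quatI, lie_quatMk]
  rw [lie_i, add_zero, hasDerivWithinAt_univ] at hderiv
  exact hderiv.deriv

theorem differentiableWithinAt_of_inv_mul_deriv_eq (hΓ : DifferentiableWithinAt ℝ Γ S t)
    (hΓ' : DifferentiableWithinAt ℝ (deriv Γ) S t) (hne : Γ t ≠ 0) (ht : t ∈ S)
    (hlog : ∀ s ∈ S, (Γ s)⁻¹ * deriv Γ s = quatMk 0 (b s) 0 (d s)) :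
    DifferentiableWithinAt ℝ d S t := by
  let imK : ℍ[ℝ] →L[ℝ] ℝ := ⟨QuaternionAlgebra.imKₗ _ _ _, continuous_imK⟩
  have him : DifferentiableWithinAt ℝ (fun s => imK ((Γ s)⁻¹ * deriv Γ s)) S t :=
    imK.differentiableAt.comp_differentiableWithinAt t ((hΓ.inv hne).mul hΓ')
  have d_eq : ∀ s ∈ S, d s = imK ((Γ s)⁻¹ * deriv Γ s) := fun s hs => by rw [hlog s hs]; rfl
  exact him.congr d_eq (d_eq t ht)

theorem deriv_deriv_projectedCurve (hΓ : ContDiff ℝ 2 Γ) (hne : ∀ s ∈ S, Γ s ≠ 0)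
    (hlog : ∀ s ∈ S, (Γ s)⁻¹ * deriv Γ s = quatMk 0 (b s) 0 (d s))
    (hS : UniqueDiffWithinAt ℝ S t) (ht : t ∈ S) :
    deriv (deriv (projectedCurve Γ)) t =
      Γ t * quatMk 0 (-4 * d t ^ 2) (2 * derivWithin d S t) (4 * b t * d t) * star (Γ t) := by
  have hdiff : Differentiable ℝ Γ := hΓ.differentiable two_ne_zero
  have hdiff' : Differentiable ℝ (deriv Γ) := hΓ.differentiable_deriv_two
  have hd' := (differentiableWithinAt_of_inv_mul_deriv_eq (hdiff t).differentiableWithinAt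
    (hdiff' t).differentiableWithinAt (hne t ht) ht hlog).hasDerivWithinAt
  have hderiv := hasDerivWithinAt_mul_mul_star
    (hasDerivAt_mul_of_inv_mul_deriv_eq (hdiff t) (hne t ht) (hlog t ht)).hasDerivWithinAt
    (hasDerivWithinAt_quatMk (hasDerivWithinAt_const t S 0) (hasDerivWithinAt_const t S 0)
      (hd'.const_mul 2) (hasDerivWithinAt_const t S 0)) (star_quatMk_zero (b t) 0 (d t))
  have frame_eq : ⁅quatMk 0 (b t) 0 (d t), quatMk 0 0 (2 * d t) 0⁆
      + quatMk 0 0 (2 * derivWithin d S t) 0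
      = quatMk 0 (-4 * d t ^ 2) (2 * derivWithin d S t) (4 * b t * d t) := by
    rw [lie_quatMk, quatMk_add_quatMk]
    congr 1 <;> ring
  rw [frame_eq] at hderiv
  -- `Γ⁻¹ Γ' = b i + d k` is known only on `S`, so the second derivative is identified within `S`.
  have deriv_eq : ∀ s ∈ S, deriv (projectedCurve Γ) s =
      Γ s * quatMk 0 0 (2 * d s) 0 * star (Γ s) :=
    fun s hs => deriv_projectedCurve (hdiff s) (hne s hs) (hlog s hs)
  have hγ' : Differentiable ℝ (deriv (projectedCurve Γ)) :=
    (contDiff_projectedCurve hΓ).differentiable_deriv_two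
  exact hS.eq_deriv S (hγ' t).hasDerivAt.hasDerivWithinAt
    (hderiv.congr deriv_eq (deriv_eq t ht))

theorem norm_deriv_projectedCurve {β δ : ℝ} (hΓ : DifferentiableAt ℝ Γ t) (hne : Γ t ≠ 0)
    (hlog : (Γ t)⁻¹ * deriv Γ t = quatMk 0 β 0 δ) :
    ‖deriv (projectedCurve Γ) t‖ = 2 * |δ| * ‖Γ t‖ ^ 2 := by
  have norm_j : ‖quatMk 0 0 (2 * δ) 0‖ = 2 * |δ| := by
    simp [norm_quatMk, Real.sqrt_sq_eq_abs, abs_mul]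
  rw [deriv_projectedCurve hΓ hne hlog, norm_mul, norm_mul, norm_star, norm_j]
  ring

theorem imdet3_projectedCurve (hΓ : ContDiff ℝ 2 Γ) (hne : ∀ s ∈ S, Γ s ≠ 0)
    (hlog : ∀ s ∈ S, (Γ s)⁻¹ * deriv Γ s = quatMk 0 (b s) 0 (d s))
    (hS : UniqueDiffWithinAt ℝ S t) (ht : t ∈ S) :
    imdet3 (projectedCurve Γ) t = 8 * d t ^ 2 * b t * ‖Γ t‖ ^ 6 := by
  let v : Fin 3 → ℍ[ℝ] := ![quatI, quatMk 0 0 (2 * d t) 0,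
    quatMk 0 (-4 * d t ^ 2) (2 * derivWithin d S t) (4 * b t * d t)]
  have iteratedDeriv_eq : (fun j : Fin 3 => iteratedDeriv j (projectedCurve Γ) t) =
      fun j => Γ t * v j * star (Γ t) := by
    ext1 j
    fin_cases j
    · rfl
    · exact (congrFun iteratedDeriv_one t).trans <|
        deriv_projectedCurve (hΓ.differentiable two_ne_zero t) (hne t ht) (hlog t ht)
    · exact (congrFun (by simp only [iteratedDeriv_succ, iteratedDeriv_zero]) t).trans <|
        deriv_deriv_projectedCurve hΓ hne hlog hS ht
  have det_v : (imMatrix v).det = 8 * d t ^ 2 * b t := by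
    simp only [v, imMatrix, imCoord, quatI, Matrix.det_fin_three, Matrix.of_apply,
      Matrix.cons_val, imI_quatMk, imJ_quatMk, imK_quatMk]
    ring
  calc imdet3 (projectedCurve Γ) t
      = (imMatrix fun j : Fin 3 => iteratedDeriv j (projectedCurve Γ) t).det := rfl
    _ = 8 * d t ^ 2 * b t * ‖Γ t‖ ^ 6 := by
      rw [iteratedDeriv_eq, det_imMatrix_mul_mul_star, det_v, mul_comm]

theorem projected_curve_speed_and_determinant_general (hS : UniqueDiffOn ℝ S)
    (hΓ : ContDiff ℝ 2 Γ) (hne : ∀ t ∈ S, Γ t ≠ 0)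
    (hlog : ∀ t ∈ S, (Γ t)⁻¹ * deriv Γ t = quatMk 0 (b t) 0 (d t)) :
    (∀ t ∈ S,
        ‖deriv (projectedCurve Γ) t‖ = 2 * |d t| * ‖Γ t‖ ^ 2 ∧
        imdet3 (projectedCurve Γ) t = 8 * d t ^ 2 * b t * ‖Γ t‖ ^ 6) ∧
    ((∀ t ∈ S, 0 < imdet3 (projectedCurve Γ) t) ↔ ∀ t ∈ S, d t ≠ 0 ∧ 0 < b t) := by
  have hdet : ∀ t ∈ S, imdet3 (projectedCurve Γ) t = 8 * d t ^ 2 * b t * ‖Γ t‖ ^ 6 :=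
    fun t ht => imdet3_projectedCurve hΓ hne hlog (hS t ht) ht
  have hpos (x y : ℝ) : 0 < 8 * x ^ 2 * y ↔ x ≠ 0 ∧ 0 < y := by
    rcases eq_or_ne x 0 with rfl | hx
    · simp
    · rw [mul_pos_iff_of_pos_left (by positivity), and_iff_right hx]
  refine ⟨fun t ht => ⟨norm_deriv_projectedCurve (hΓ.differentiable two_ne_zero t)
    (hne t ht) (hlog t ht), hdet t ht⟩, forall₂_congr fun t ht => ?_⟩
  rw [hdet t ht, mul_pos_iff_of_pos_right (pow_pos (norm_pos_iff.2 (hne t ht)) 6), hpos]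

end ProjectedCurve

/-- If the logarithmic derivative of a unit quaternion curve `Γ` is `b i + d k` with
`d > 0`, then the curve `γ = Γ i Γ̄` on `S² ⊂ Im ℍ` satisfies `‖γ'‖ = 2d` and
`det(γ, γ', γ'') = 8 d² b`; in particular `γ` is positive locally convex iff `b > 0`. -/
theorem projected_curve_speed_and_determinant
    (Γ : ℝ → Quaternion ℝ) (b d : ℝ → ℝ)
    (hΓ : ContDiff ℝ (⊤ : ℕ∞) Γ)
    (hu : ∀ t ∈ Icc (0 : ℝ) 1, ‖Γ t‖ = 1)
    (hlog : ∀ t ∈ Icc (0 : ℝ) 1, (Γ t)⁻¹ * deriv Γ t = quatMk 0 (b t) 0 (d t))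
    (hd : ∀ t ∈ Icc (0 : ℝ) 1, 0 < d t) :
    (∀ t ∈ Icc (0 : ℝ) 1,
        ‖deriv (fun s => Γ s * quatI * star (Γ s)) t‖ = 2 * d t ∧
        imdet3 (fun s => Γ s * quatI * star (Γ s)) t = 8 * d t ^ 2 * b t) ∧
    ((∀ t ∈ Icc (0 : ℝ) 1, 0 < imdet3 (fun s => Γ s * quatI * star (Γ s)) t) ↔
      ∀ t ∈ Icc (0 : ℝ) 1, 0 < b t) := by
  have hne : ∀ t ∈ Icc (0 : ℝ) 1, Γ t ≠ 0 := fun t ht => by simp [← norm_ne_zero_iff, hu t ht]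
  have ⟨hformulas, hpos⟩ := projected_curve_speed_and_determinant_general
    (uniqueDiffOn_Icc zero_lt_one) (contDiff_infty.1 hΓ 2) hne hlog
  exact ⟨fun t ht => (hformulas t ht).imp (·.trans <| by simp [hu t ht, abs_of_pos (hd t ht)])
    (·.trans <| by simp [hu t ht]),
    hpos.trans (forall₂_congr fun t ht => and_iff_right (hd t ht).ne')⟩
end

section
/- Let n ≥ 1, let γ : [0,1] → ℝ^{n+1} be a smooth curve and let g : [0,1] → ℝ be a smooth function. Then for every t ∈ [0,1], det((gγ)(t), (gγ)'(t), …, (gγ)^{(n)}(t)) = g(t)^{n+1} · det(γ(t), γ'(t), …, γ^{(n)}(t)), where gγ denotes the curve t ↦ g(t)γ(t). In particular, if g(t) > 0 for all t, then γ is locally convex if and only if gγ is locally convex. -/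
open Set

/-- Determinant of the `m×m` matrix whose `j`-th column is the `j`-th derivative of the
curve `γ : ℝ → ℝ^m` at `t`. -/
noncomputable def detCurve (m : ℕ) (γ : ℝ → Fin m → ℝ) (t : ℝ) : ℝ :=
  (Matrix.of fun i j : Fin m => iteratedDeriv (j : ℕ) γ t i).det

/-
By the Leibniz rule, `(gγ)⁽ʲ⁾ = ∑ₖ (j choose k) g⁽ʲ⁻ᵏ⁾ γ⁽ᵏ⁾`, so the matrix of derivatives of `gγ`
is that of `γ` multiplied on the right by an upper triangular matrix whose diagonal entries are
all `g`.
-/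

section Leibniz

variable {𝕜 R F : Type*} [NontriviallyNormedField 𝕜] [NormedRing R] [NormedAlgebra 𝕜 R]
  [NormedAddCommGroup F] [NormedSpace 𝕜 F] [Module R F] [IsBoundedSMul R F] [IsScalarTower 𝕜 R F]

theorem iteratedDeriv_fun_smul {n : ℕ} {g : 𝕜 → R} {f : 𝕜 → F} {t : 𝕜}
    (hg : ContDiffAt 𝕜 n g t) (hf : ContDiffAt 𝕜 n f t) :
    iteratedDeriv n (fun s ↦ g s • f s) t = ∑ k ∈ Finset.range (n + 1),
      n.choose k • iteratedDeriv (n - k) g t • iteratedDeriv k f t := by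
  have leibniz : iteratedDeriv n (fun s ↦ g s • f s) t = ∑ k ∈ Finset.range (n + 1),
      n.choose k • iteratedDeriv k g t • iteratedDeriv (n - k) f t := by
    simpa only [iteratedDerivWithin_univ, Pi.smul_def'] using iteratedDerivWithin_smul (mem_univ t)
      uniqueDiffOn_univ hg.contDiffWithinAt hf.contDiffWithinAt
  rw [leibniz, ← Finset.sum_flip]
  refine Finset.sum_congr rfl fun k hk ↦ ?_
  have hkn : k ≤ n := Finset.mem_range_succ_iff.mp hk
  rw [Nat.choose_symm hkn, Nat.sub_sub_self hkn]

end Leibniz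

section JetMatrix

variable {𝕜 R ι : Type*} [NontriviallyNormedField 𝕜] [NormedCommRing R] [NormedAlgebra 𝕜 R]

/-- The `n`-jet of a curve `γ` at `t`, as the matrix with columns `γ(t), γ'(t), …, γ⁽ⁿ⁾(t)`. For
`n + 1` coordinates its determinant is the Wronskian, which decides local convexity. -/
noncomputable def jetMatrix [Fintype ι] (n : ℕ) (γ : 𝕜 → ι → R) (t : 𝕜) :
    Matrix ι (Fin (n + 1)) R :=
  Matrix.of fun i j ↦ iteratedDeriv j γ t i

/-- The matrix by which multiplication by the scalar function `g` acts on `n`-jets at `t`. The entry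
in row `k` and column `j` is the coefficient of `γ⁽ᵏ⁾` in the Leibniz formula for `(gγ)⁽ʲ⁾`; for
`j < k` the binomial coefficient vanishes, whatever the truncated `j - k` is. -/
noncomputable def leibnizMatrix (n : ℕ) (g : 𝕜 → R) (t : 𝕜) :
    Matrix (Fin (n + 1)) (Fin (n + 1)) R :=
  Matrix.of fun k j ↦ ((j : ℕ).choose k : R) * iteratedDeriv (j - k) g t

theorem isUpperTriangular_leibnizMatrix (n : ℕ) (g : 𝕜 → R) (t : 𝕜) :
    (leibnizMatrix n g t).IsUpperTriangular := by
  intro k j hjk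
  have hlt : (j : ℕ) < k := hjk
  simp [leibnizMatrix, Nat.choose_eq_zero_of_lt hlt]

theorem det_leibnizMatrix (n : ℕ) (g : 𝕜 → R) (t : 𝕜) :
    (leibnizMatrix n g t).det = g t ^ (n + 1) := by
  rw [Matrix.det_of_isUpperTriangular (isUpperTriangular_leibnizMatrix n g t)]
  simp [leibnizMatrix]

theorem jetMatrix_smul [Fintype ι] {n : ℕ} {g : 𝕜 → R} {γ : 𝕜 → ι → R} {t : 𝕜}
    (hg : ContDiffAt 𝕜 n g t) (hγ : ContDiffAt 𝕜 n γ t) :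
    jetMatrix n (fun s ↦ g s • γ s) t = jetMatrix n γ t * leibnizMatrix n g t := by
  ext i j
  have hj : ((j : ℕ) : WithTop ℕ∞) ≤ n := by exact_mod_cast j.is_le
  calc iteratedDeriv j (fun s ↦ g s • γ s) t i
      = ∑ k ∈ Finset.range (j + 1),
          iteratedDeriv k γ t i * (((j : ℕ).choose k : R) * iteratedDeriv (j - k) g t) := by
        rw [iteratedDeriv_fun_smul (hg.of_le hj) (hγ.of_le hj), Finset.sum_apply]
        refine Finset.sum_congr rfl fun k _ ↦ ?_
        simp only [Pi.smul_apply, nsmul_eq_mul, smul_eq_mul]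
        ring
    _ = ∑ k ∈ Finset.range (n + 1),
          iteratedDeriv k γ t i * (((j : ℕ).choose k : R) * iteratedDeriv (j - k) g t) := by
        refine Finset.sum_subset (Finset.range_mono j.is_lt) fun k _ hk ↦ ?_
        have hjk : (j : ℕ) < k := by simpa [Nat.lt_succ_iff] using hk
        simp [Nat.choose_eq_zero_of_lt hjk]
    _ = (jetMatrix n γ t * leibnizMatrix n g t) i j :=
        (Fin.sum_univ_eq_sum_range (fun k ↦ iteratedDeriv k γ t i *
          (((j : ℕ).choose k : R) * iteratedDeriv (j - k) g t)) (n + 1)).symm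

theorem det_jetMatrix_smul {n : ℕ} {g : 𝕜 → R} {γ : 𝕜 → Fin (n + 1) → R} {t : 𝕜}
    (hg : ContDiffAt 𝕜 n g t) (hγ : ContDiffAt 𝕜 n γ t) :
    (jetMatrix n (fun s ↦ g s • γ s) t).det = g t ^ (n + 1) * (jetMatrix n γ t).det := by
  rw [jetMatrix_smul hg hγ, Matrix.det_mul, det_leibnizMatrix, mul_comm]

theorem det_scaling_general {n : ℕ} {g : 𝕜 → R} {γ : 𝕜 → Fin (n + 1) → R} {s : Set 𝕜}
    (hγ : ∀ t ∈ s, ContDiffAt 𝕜 n γ t) (hg : ∀ t ∈ s, ContDiffAt 𝕜 n g t) :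
    (∀ t ∈ s, (jetMatrix n (fun x ↦ g x • γ x) t).det = g t ^ (n + 1) * (jetMatrix n γ t).det) ∧
    ((∀ t ∈ s, g t ∈ nonZeroDivisors R) →
      ((∀ t ∈ s, (jetMatrix n γ t).det ≠ 0) ↔
        ∀ t ∈ s, (jetMatrix n (fun x ↦ g x • γ x) t).det ≠ 0)) := by
  have scaling : ∀ t ∈ s, (jetMatrix n (fun x ↦ g x • γ x) t).det =
      g t ^ (n + 1) * (jetMatrix n γ t).det :=
    fun t ht ↦ det_jetMatrix_smul (hg t ht) (hγ t ht)
  refine ⟨scaling, fun hreg ↦ forall₂_congr fun t ht ↦ ?_⟩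
  rw [scaling t ht, ne_eq, ne_eq,
    mul_left_mem_nonZeroDivisors_eq_zero_iff (pow_mem (hreg t ht) (n + 1))]

end JetMatrix

/-- Scaling formula: `det((gγ), (gγ)', …, (gγ)⁽ⁿ⁾) = g^{n+1} det(γ, γ', …, γ⁽ⁿ⁾)`;
in particular multiplying by a positive function preserves local convexity. -/
theorem det_scaling (n : ℕ) (hn : 1 ≤ n)
    (γ : ℝ → Fin (n+1) → ℝ) (g : ℝ → ℝ)
    (hγ : ContDiff ℝ (⊤ : ℕ∞) γ) (hg : ContDiff ℝ (⊤ : ℕ∞) g) :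
    (∀ t ∈ Icc (0 : ℝ) 1,
        detCurve (n+1) (fun s => g s • γ s) t = g t ^ (n+1) * detCurve (n+1) γ t) ∧
    ((∀ t ∈ Icc (0 : ℝ) 1, 0 < g t) →
      ((∀ t ∈ Icc (0 : ℝ) 1, detCurve (n+1) γ t ≠ 0) ↔
        ∀ t ∈ Icc (0 : ℝ) 1, detCurve (n+1) (fun s => g s • γ s) t ≠ 0)) :=
  (det_scaling_general (fun _ _ ↦ contDiff_infty.mp hγ n |>.contDiffAt)
    (fun _ _ ↦ contDiff_infty.mp hg n |>.contDiffAt)).imp_right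
    fun nonvanishing_iff hpos ↦ nonvanishing_iff fun t ht ↦
      mem_nonZeroDivisors_of_ne_zero (hpos t ht).ne'
end
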